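/- Let n ≥ 2, let Ω, Ω̃ ⊆ ℝⁿ be bounded, uniformly convex open domains with smooth boundary, with the closure of Ω̃ contained in the open unit ball B₁(0). Then there exists a constant C₃₇ > 0, depending only on Ω and Ω̃, such that for every strictly convex solution (u, c) of the second boundary value problem for the Lorentz mean curvature operator on (Ω, Ω̃), the Hessian of u is uniformly pinched: (1/C₃₇)|ξ|² ≤ ⟨ξ, D²u(x) ξ⟩ ≤ C₃₇|ξ|² for all x in the closure of Ω and all ξ ∈ ℝⁿ. -/

import Mathlib

noncomputable section
open MeasureTheory
open scoped RealInnerProductSpace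

/-- The `i`-th standard basis vector of `ℝⁿ`. -/
def ev (n : ℕ) (i : Fin n) : EuclideanSpace ℝ (Fin n) := EuclideanSpace.single i 1

/-- Lorentz mean curvature operator `M[u] x = ∑ i, ∂ᵢ (∂ᵢ u / √(1 - |∇u|²)) x`. -/
def MOp (n : ℕ) (u : EuclideanSpace ℝ (Fin n) → ℝ) (x : EuclideanSpace ℝ (Fin n)) : ℝ :=
  ∑ i : Fin n,
    fderiv ℝ (fun y => fderiv ℝ u y (ev n i) / Real.sqrt (1 - ‖gradient u y‖ ^ 2)) x (ev n i)

/-- Euclidean mean curvature operator `E[u] x = ∑ i, ∂ᵢ (∂ᵢ u / √(1 + |∇u|²)) x`. -/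
def EOp (n : ℕ) (u : EuclideanSpace ℝ (Fin n) → ℝ) (x : EuclideanSpace ℝ (Fin n)) : ℝ :=
  ∑ i : Fin n,
    fderiv ℝ (fun y => fderiv ℝ u y (ev n i) / Real.sqrt (1 + ‖gradient u y‖ ^ 2)) x (ev n i)

/-- `Ω` is a uniformly convex domain with smooth boundary, exhibited by the defining
function `h` with uniform concavity constant `θ`:  `h` is smooth, `Ω = {h > 0}`,
`|∇h| = 1` on `∂Ω`, and `⟨ξ, D²h(p) ξ⟩ ≤ -θ |ξ|²` for all `p, ξ`. -/
def IsUnifConvexDefFn (n : ℕ) (Ω : Set (EuclideanSpace ℝ (Fin n)))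
    (h : EuclideanSpace ℝ (Fin n) → ℝ) (θ : ℝ) : Prop :=
  ContDiff ℝ (⊤ : ℕ∞) h ∧ Ω = {p | 0 < h p} ∧
  (∀ p ∈ frontier Ω, ‖gradient h p‖ = 1) ∧ 0 < θ ∧
  ∀ p ξ : EuclideanSpace ℝ (Fin n), ⟪ξ, fderiv ℝ (gradient h) p ξ⟫ ≤ -θ * ‖ξ‖ ^ 2

/-- `u` is smooth on the closure of `Ω` (i.e. on an open neighbourhood of it). -/
def SmoothOnClosure (n : ℕ) (Ω : Set (EuclideanSpace ℝ (Fin n)))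
    (u : EuclideanSpace ℝ (Fin n) → ℝ) : Prop :=
  ∃ U : Set (EuclideanSpace ℝ (Fin n)), IsOpen U ∧ closure Ω ⊆ U ∧ ContDiffOn ℝ (⊤ : ℕ∞) u U

/-- `(u, c)` is a strictly convex solution of the second boundary value problem for the
Lorentz mean curvature operator on `(Ω, Ω')`: `u` is smooth up to the boundary, spacelike
(`|∇u| < 1`), has positive definite Hessian `D²u` on the closure of `Ω`, its gradient map
is a bijection from `Ω` onto `Ω'`, and `M[u] = c` on `Ω`. -/
def IsSol (n : ℕ) (Ω Ω' : Set (EuclideanSpace ℝ (Fin n)))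
    (u : EuclideanSpace ℝ (Fin n) → ℝ) (c : ℝ) : Prop :=
  SmoothOnClosure n Ω u ∧
  (∀ x ∈ closure Ω, ‖gradient u x‖ < 1) ∧
  (∀ x ∈ closure Ω, ∀ ξ : EuclideanSpace ℝ (Fin n), ξ ≠ 0 →
      0 < ⟪ξ, fderiv ℝ (gradient u) x ξ⟫) ∧
  Set.BijOn (gradient u) Ω Ω' ∧
  (∀ x ∈ Ω, MOp n u x = c)

/-- `(u, c)` is a strictly convex solution of the second boundary value problem for the
Euclidean mean curvature operator on `(Ω, Ω')`. -/
def IsSolE (n : ℕ) (Ω Ω' : Set (EuclideanSpace ℝ (Fin n)))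
    (u : EuclideanSpace ℝ (Fin n) → ℝ) (c : ℝ) : Prop :=
  SmoothOnClosure n Ω u ∧
  (∀ x ∈ closure Ω, ∀ ξ : EuclideanSpace ℝ (Fin n), ξ ≠ 0 →
      0 < ⟪ξ, fderiv ℝ (gradient u) x ξ⟫) ∧
  Set.BijOn (gradient u) Ω Ω' ∧
  (∀ x ∈ Ω, EOp n u x = c)

/-- `ut` is the Legendre transform of `u`: it is smooth up to the boundary of `Ω'`,
satisfies `ut (∇u x) = ⟨x, ∇u x⟩ - u x` and `∇ut (∇u x) = x` for `x ∈ Ω`. -/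
def IsLegendre (n : ℕ) (Ω Ω' : Set (EuclideanSpace ℝ (Fin n)))
    (u ut : EuclideanSpace ℝ (Fin n) → ℝ) : Prop :=
  SmoothOnClosure n Ω' ut ∧
  (∀ x ∈ Ω, ut (gradient u x) = ⟪x, gradient u x⟫ - u x) ∧
  (∀ x ∈ Ω, gradient ut (gradient u x) = x)

/-- The coefficient matrix `s_ij(p) = (δ_ij + pᵢpⱼ/(1 - |p|²)) / √(1 - |p|²)` of the
Lorentz mean curvature operator written in nondivergence form. -/
def sMat (n : ℕ) (p : EuclideanSpace ℝ (Fin n)) (i j : Fin n) : ℝ :=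
  ((if i = j then (1 : ℝ) else 0) + p i * p j / (1 - ‖p‖ ^ 2)) / Real.sqrt (1 - ‖p‖ ^ 2)

/-- `Ω` has smooth boundary: it is the superlevel set of a smooth function whose
gradient does not vanish on the boundary. -/
def HasSmoothBoundary (n : ℕ) (Ω : Set (EuclideanSpace ℝ (Fin n))) : Prop :=
  ∃ g : EuclideanSpace ℝ (Fin n) → ℝ, ContDiff ℝ (⊤ : ℕ∞) g ∧ Ω = {p | 0 < g p} ∧
    ∀ p ∈ frontier Ω, gradient g p ≠ 0

/-- `B(p) = Iₙ + p pᵀ / (v (1 + v))`, `v = √(1 - |p|²)`: the positive square root of the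
inverse induced metric of a spacelike graph with gradient `p`. -/
def sqB (n : ℕ) (p : EuclideanSpace ℝ (Fin n)) : Matrix (Fin n) (Fin n) ℝ :=
  1 + (Real.sqrt (1 - ‖p‖ ^ 2) * (1 + Real.sqrt (1 - ‖p‖ ^ 2)))⁻¹ •
      Matrix.of fun i j => p i * p j

/-- `B'(p) = Iₙ - p pᵀ / (1 + v)`, `v = √(1 - |p|²)`: the square root of the induced
metric of a spacelike graph with gradient `p`. -/
def sqBinv (n : ℕ) (p : EuclideanSpace ℝ (Fin n)) : Matrix (Fin n) (Fin n) ℝ :=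
  1 - (1 + Real.sqrt (1 - ‖p‖ ^ 2))⁻¹ • Matrix.of fun i j => p i * p j

lemma secder {F : Type*} [NormedAddCommGroup F] [InnerProductSpace ℝ F]
    (z : F → ℝ) (P : F → F) (W : F →L[ℝ] F) (x : F)
    (hP : ∀ᶠ y in nhds x, HasFDerivAt z (innerSL ℝ (P y)) y)
    (hW : HasFDerivAt P W x) (hm : IsLocalMax z x) :
    P x = 0 ∧ ∀ ξ : F, ⟪ξ, W ξ⟫ ≤ 0 := by
  have h0 : P x = 0 := by
    have h1 := hm.hasFDerivAt_eq_zero hP.self_of_nhds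
    have h2 : (innerSL ℝ (P x)) (P x) = 0 := by rw [h1]; rfl
    simpa using h2
  refine ⟨h0, fun ξ => ?_⟩
  by_contra hpos
  push Not at hpos
  have hline : ∀ t : ℝ, HasDerivAt (fun s : ℝ => x + s • ξ) ξ t := fun t => by
    simpa using ((hasDerivAt_id t).smul_const ξ).const_add x
  have hcont : Filter.Tendsto (fun s : ℝ => x + s • ξ) (nhds 0) (nhds x) := by
    have : ContinuousAt (fun s : ℝ => x + s • ξ) 0 := (hline 0).continuousAt
    simpa [ContinuousAt] using this
  set φ : ℝ → ℝ := fun t => z (x + t • ξ) with hφ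
  have hd : ∀ᶠ t in nhds (0:ℝ), HasDerivAt φ ⟪P (x + t • ξ), ξ⟫ t := by
    filter_upwards [hcont.eventually hP] with t ht
    have := ht.comp_hasDerivAt t (hline t)
    rw [innerSL_apply_apply] at this
    exact this
  have hde : deriv φ =ᶠ[nhds 0] fun t => ⟪P (x + t • ξ), ξ⟫ := hd.mono fun t ht => ht.deriv
  have hW' : HasFDerivAt P W (x + (0:ℝ) • ξ) := by simpa using hW
  have hdd : HasDerivAt (fun t : ℝ => ⟪P (x + t • ξ), ξ⟫) ⟪W ξ, ξ⟫ 0 := by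
    have := (hW'.comp_hasDerivAt (0:ℝ) (hline 0)).inner ℝ (hasDerivAt_const (0:ℝ) ξ)
    simpa using this
  have hdd' : deriv (deriv φ) 0 = ⟪W ξ, ξ⟫ := by
    rw [hde.deriv_eq]; exact hdd.deriv
  have hmax : IsLocalMax φ 0 := by
    have := hcont.eventually hm
    filter_upwards [this] with t ht
    simpa [hφ] using ht
  have hmin : IsLocalMin φ 0 := by
    apply isLocalMin_of_deriv_deriv_pos
    · rw [hdd', real_inner_comm]; exact hpos
    · rw [hde.self_of_nhds]; simp [h0]
    · exact hd.self_of_nhds.continuousAt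
  have hc : φ =ᶠ[nhds 0] fun _ => φ 0 := by
    filter_upwards [hmax, hmin] with t h1 h2
    exact le_antisymm h1 h2
  have h3 : deriv φ =ᶠ[nhds 0] fun _ => 0 := by
    have := hc.deriv
    simpa using this
  have h4 := h3.deriv_eq
  rw [hdd'] at h4
  simp at h4
  rw [real_inner_comm, h4] at hpos
  exact lt_irrefl _ hpos

/-- The quadratic-type operator. -/
def Qf (n : ℕ) (p : EuclideanSpace ℝ (Fin n))
    (H : EuclideanSpace ℝ (Fin n) →L[ℝ] EuclideanSpace ℝ (Fin n)) : ℝ :=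
  (1 - ‖p‖ ^ 2) * ∑ i, ⟪ev n i, H (ev n i)⟫ + ⟪p, H p⟫

lemma ev_norm (n : ℕ) (i : Fin n) : ‖ev n i‖ = 1 := by simp [ev]

lemma ev_inner (n : ℕ) (i : Fin n) (x : EuclideanSpace ℝ (Fin n)) : ⟪ev n i, x⟫ = x i := by
  simp [ev, EuclideanSpace.inner_single_left]

lemma ev_sum_sq (n : ℕ) (x : EuclideanSpace ℝ (Fin n)) : ∑ i, ⟪x, ev n i⟫ ^ 2 = ‖x‖ ^ 2 := by
  rw [EuclideanSpace.real_norm_sq_eq]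
  refine Finset.sum_congr rfl fun i _ => ?_
  rw [real_inner_comm, ev_inner]

/-- The barrier computation. -/
lemma barrier_deriv {F : Type*} [NormedAddCommGroup F] [InnerProductSpace ℝ F]
    (α : ℝ) (y₀ x : F) :
    HasFDerivAt (fun y : F => Real.exp (-α * ‖y - y₀‖ ^ 2))
      (innerSL ℝ ((-2 * α * Real.exp (-α * ‖x - y₀‖ ^ 2)) • (x - y₀))) x := by
  have h1 : HasFDerivAt (fun y : F => ‖y - y₀‖ ^ 2) (2 • (innerSL ℝ (x - y₀))) x := by
    have := ((hasFDerivAt_id (𝕜 := ℝ) x).sub_const y₀).norm_sq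
    simpa using this
  have h2 := (h1.const_mul (-α)).exp
  convert h2 using 1
  ext ξ
  simp
  ring

lemma barrier_deriv2 {F : Type*} [NormedAddCommGroup F] [InnerProductSpace ℝ F]
    (α : ℝ) (y₀ x : F) :
    ∃ B : F →L[ℝ] F,
      HasFDerivAt (fun y : F => (-2 * α * Real.exp (-α * ‖y - y₀‖ ^ 2)) • (y - y₀)) B x ∧
      ∀ ξ, ⟪ξ, B ξ⟫ = Real.exp (-α * ‖x - y₀‖ ^ 2) *
        (4 * α ^ 2 * ⟪x - y₀, ξ⟫ ^ 2 - 2 * α * ‖ξ‖ ^ 2) := by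
  refine ⟨_, ((barrier_deriv α y₀ x).const_mul (-2 * α)).smul
    ((hasFDerivAt_id (𝕜 := ℝ) x).sub_const y₀), fun ξ => ?_⟩
  simp only [inner_add_right, inner_smul_right, add_apply, smul_apply,
    ContinuousLinearMap.smulRight_apply, ContinuousLinearMap.id_apply, innerSL_apply_apply,
    inner_smul_left, real_inner_self_eq_norm_sq, smul_eq_mul, RCLike.conj_to_real,
    real_inner_comm (x - y₀) ξ]
  rw [real_inner_comm ξ (x - y₀)]
  ring

lemma Qf_barrier (n : ℕ) (hn : 1 ≤ n) (p d : EuclideanSpace ℝ (Fin n)) (ρ ε e α : ℝ)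
    (hp : ‖p‖ ≤ ρ) (hρ : ρ < 1) (hε : 0 ≤ ε * e) (hα : 0 ≤ α)
    (W : EuclideanSpace ℝ (Fin n) →L[ℝ] EuclideanSpace ℝ (Fin n))
    (hW : ∀ ξ, ⟪ξ, W ξ⟫ ≤ - (ε * (e * (4 * α ^ 2 * ⟪d, ξ⟫ ^ 2 - 2 * α * ‖ξ‖ ^ 2)))) :
    Qf n p W ≤ - (ε * e * (4 * α ^ 2 * (1 - ρ ^ 2) * ‖d‖ ^ 2 - 2 * α * n)) := by
  have hp0 := norm_nonneg p
  have h1 : ‖p‖ ^ 2 ≤ ρ ^ 2 := by gcongr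
  have h2 : ρ ^ 2 < 1 := by nlinarith
  have hs : ∑ i, ⟪ev n i, W (ev n i)⟫ ≤
      - (ε * (e * (4 * α ^ 2 * ‖d‖ ^ 2 - 2 * α * n))) := by
    calc ∑ i, ⟪ev n i, W (ev n i)⟫ ≤ ∑ i, - (ε * (e * (4 * α ^ 2 * ⟪d, ev n i⟫ ^ 2 - 2 * α))) := by
          refine Finset.sum_le_sum fun i _ => ?_
          have := hW (ev n i)
          rw [ev_norm] at this
          simpa using this
      _ = _ := by
          rw [Finset.sum_neg_distrib, ← Finset.mul_sum, ← Finset.mul_sum, Finset.sum_sub_distrib,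
            ← Finset.mul_sum, ev_sum_sq]
          simp
          left; left; ring
  have h3 := hW p
  have hn' : (1:ℝ) ≤ n := by exact_mod_cast hn
  unfold Qf
  have h4 : (1 - ‖p‖ ^ 2) * ∑ i, ⟪ev n i, W (ev n i)⟫ ≤
      (1 - ‖p‖ ^ 2) * - (ε * (e * (4 * α ^ 2 * ‖d‖ ^ 2 - 2 * α * n))) :=
    mul_le_mul_of_nonneg_left hs (by linarith)
  have h5 : 0 ≤ ε * e * (4 * α ^ 2 * ⟪d, p⟫ ^ 2) := by positivity
  have h6 : 0 ≤ ε * e * (4 * α ^ 2 * ‖d‖ ^ 2 * (ρ ^ 2 - ‖p‖ ^ 2)) := by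
    have : 0 ≤ ρ ^ 2 - ‖p‖ ^ 2 := by linarith
    positivity
  have h7 : 0 ≤ ε * e * (2 * α * ‖p‖ ^ 2 * (n - 1)) := by
    have : 0 ≤ (n:ℝ) - 1 := by linarith
    positivity
  nlinarith

lemma hopf (n : ℕ) (hn : 1 ≤ n) (w : EuclideanSpace ℝ (Fin n) → ℝ)
    (P : EuclideanSpace ℝ (Fin n) → EuclideanSpace ℝ (Fin n))
    (W : EuclideanSpace ℝ (Fin n) → EuclideanSpace ℝ (Fin n) →L[ℝ] EuclideanSpace ℝ (Fin n))
    (y₀ x₀ : EuclideanSpace ℝ (Fin n)) (R ρ K : ℝ) (hR : 0 < R) (hx₀ : ‖x₀ - y₀‖ = R)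
    (hP : ∀ x ∈ Metric.closedBall y₀ R, HasFDerivAt w (innerSL ℝ (P x)) x)
    (hW : ∀ x ∈ Metric.ball y₀ R, HasFDerivAt P (W x) x)
    (hle : ∀ x ∈ Metric.closedBall y₀ R, w x ≤ w x₀)
    (hlt : ∀ x ∈ Metric.ball y₀ R, w x < w x₀) (hK : 0 ≤ K) (hρ : ρ < 1)
    (hQ : ∀ x ∈ Metric.ball y₀ R, ∃ p, ‖p‖ ≤ ρ ∧ -(K * ‖P x‖) ≤ Qf n p (W x)) :
    0 < ⟪P x₀, x₀ - y₀⟫ := by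
  have hρ0 : 0 ≤ ρ := by
    obtain ⟨p, hp, -⟩ := hQ y₀ (Metric.mem_ball_self hR)
    exact (norm_nonneg p).trans hp
  have hlam : 0 < 1 - ρ ^ 2 := by nlinarith
  obtain ⟨α, hα, hαe⟩ : ∃ α : ℝ, 0 < α ∧ α * (1 - ρ ^ 2) * R ^ 2 = 2 * (n + K * R + 1) :=
    ⟨2 * (n + K * R + 1) / ((1 - ρ ^ 2) * R ^ 2), by positivity, by field_simp⟩
  have hcw : ContinuousOn w (Metric.closedBall y₀ R) := fun x hx =>
    (hP x hx).continuousAt.continuousWithinAt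
  obtain ⟨x₂, hx₂, hx₂m⟩ := (isCompact_closedBall y₀ (R/2)).exists_isMaxOn
    ⟨y₀, Metric.mem_closedBall_self (by positivity)⟩
    (hcw.mono (Metric.closedBall_subset_closedBall (by linarith)))
  have hx₂' : w x₂ < w x₀ := hlt x₂ (by
    rw [Metric.mem_closedBall] at hx₂; rw [Metric.mem_ball]; linarith)
  obtain ⟨ε, hεe⟩ : ∃ ε, ε = w x₀ - w x₂ := ⟨_, rfl⟩
  have hε : 0 < ε := by linarith
  set b : EuclideanSpace ℝ (Fin n) → ℝ := fun y => Real.exp (-α * ‖y - y₀‖ ^ 2) with hb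
  set Bg : EuclideanSpace ℝ (Fin n) → EuclideanSpace ℝ (Fin n) :=
    fun y => (-2 * α * Real.exp (-α * ‖y - y₀‖ ^ 2)) • (y - y₀) with hBg
  set z : EuclideanSpace ℝ (Fin n) → ℝ := fun y => w y + ε * b y with hz
  have hzd : ∀ x ∈ Metric.closedBall y₀ R,
      HasFDerivAt z (innerSL ℝ (P x + ε • Bg x)) x := by
    intro x hx
    have := (hP x hx).add ((barrier_deriv α y₀ x).const_mul ε)
    have e : innerSL ℝ (P x + ε • Bg x) = innerSL ℝ (P x) + ε • innerSL ℝ (Bg x) := by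
      ext ξ; simp
    rw [e]; exact this
  set A : Set (EuclideanSpace ℝ (Fin n)) := Metric.closedBall y₀ R \ Metric.ball y₀ (R/2) with hA
  have hAc : IsCompact A := (isCompact_closedBall y₀ R).diff Metric.isOpen_ball
  have hx₀A : x₀ ∈ A := by
    constructor
    · rw [Metric.mem_closedBall, dist_eq_norm, hx₀]
    · rw [Metric.mem_ball, dist_eq_norm, hx₀]; linarith
  obtain ⟨x₁, hx₁, hx₁m⟩ := hAc.exists_isMaxOn ⟨x₀, hx₀A⟩
    (f := z) (fun x hx => (hzd x hx.1).continuousAt.continuousWithinAt)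
  have hx₁R : ‖x₁ - y₀‖ ≤ R := by
    have := hx₁.1; rwa [Metric.mem_closedBall, dist_eq_norm] at this
  have hx₁r : R / 2 ≤ ‖x₁ - y₀‖ := by
    have := hx₁.2; rwa [Metric.mem_ball, dist_eq_norm, not_lt] at this
  have hbpos : ∀ x, 0 < b x := fun x => Real.exp_pos _
  have hb1 : ∀ x, b x ≤ 1 := fun x => by
    apply Real.exp_le_one_iff.2
    have : 0 ≤ α * ‖x - y₀‖ ^ 2 := by positivity
    linarith
  have key : z x₁ ≤ z x₀ := by
    rcases eq_or_lt_of_le hx₁R with h | h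
    · have h1 : b x₁ = b x₀ := by simp only [hb, h, hx₀]
      have := hle x₁ hx₁.1
      simp only [hz, h1]; linarith
    rcases eq_or_lt_of_le hx₁r with h' | h'
    · have h1 : w x₁ ≤ w x₂ := hx₂m (by
        rw [Metric.mem_closedBall, dist_eq_norm]; exact h'.symm.le)
      have h2 : ε * b x₁ ≤ ε * 1 := by gcongr; exact hb1 _
      have h3 : 0 < ε * b x₀ := mul_pos hε (hbpos _)
      simp only [hz]; linarith
    · exfalso
      have hball : x₁ ∈ Metric.ball y₀ R := by rwa [Metric.mem_ball, dist_eq_norm]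
      have hopen : ∀ᶠ x in nhds x₁, R / 2 < ‖x - y₀‖ :=
        (continuous_norm.comp (continuous_id.sub continuous_const)).continuousAt.eventually
          (lt_mem_nhds h')
      have hmax : IsLocalMax z x₁ := by
        filter_upwards [hopen, Metric.isOpen_ball.mem_nhds hball] with x hxa hxb
        refine hx₁m ⟨Metric.ball_subset_closedBall hxb, ?_⟩
        rw [Metric.mem_ball, dist_eq_norm, not_lt]; exact hxa.le
      obtain ⟨B, hB, hBq⟩ := barrier_deriv2 α y₀ x₁
      have hev : ∀ᶠ x in nhds x₁, HasFDerivAt z (innerSL ℝ (P x + ε • Bg x)) x := by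
        filter_upwards [Metric.isOpen_ball.mem_nhds hball] with x hxb
        exact hzd x (Metric.ball_subset_closedBall hxb)
      obtain ⟨e1, e2⟩ := secder z (fun x => P x + ε • Bg x) (W x₁ + ε • B) x₁ hev
        ((hW x₁ hball).add (hB.const_smul ε)) hmax
      obtain ⟨p, hp, hpQ⟩ := hQ x₁ hball
      have hPn : ‖P x₁‖ = ε * (2 * α * b x₁ * ‖x₁ - y₀‖) := by
        have : P x₁ = - (ε • Bg x₁) := eq_neg_of_add_eq_zero_left e1
        rw [this, norm_neg, norm_smul, Real.norm_of_nonneg hε.le]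
        simp only [hBg]
        rw [norm_smul, Real.norm_eq_abs, abs_mul, abs_mul, abs_of_pos hα, Real.abs_exp]
        simp [hb]
      have hq := Qf_barrier n hn p (x₁ - y₀) ρ ε (b x₁) α hp hρ
        (mul_nonneg hε.le (hbpos _).le) hα.le (W x₁) (fun ξ => by
          have h1 := e2 ξ
          simp only [add_apply, smul_apply, inner_add_right, inner_smul_right] at h1
          rw [hBq ξ] at h1
          simp only [hb]
          linarith)
      rw [hPn] at hpQ
      have hpos : 0 < ε * b x₁ * (2 * α) := by have := hbpos x₁; positivity
      have h1 : ε * b x₁ * (2 * α) * (2 * α * (1 - ρ ^ 2) * ‖x₁ - y₀‖ ^ 2) ≤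
          ε * b x₁ * (2 * α) * (n + K * ‖x₁ - y₀‖) := by nlinarith
      have h2 := le_of_mul_le_mul_left h1 hpos
      have h3 : K * ‖x₁ - y₀‖ ≤ K * R := by gcongr
      have h4 : 2 * α * (1 - ρ ^ 2) * (R / 2) ^ 2 ≤ 2 * α * (1 - ρ ^ 2) * ‖x₁ - y₀‖ ^ 2 := by
        gcongr
      nlinarith
  have hmaxA : IsMaxOn z A x₀ := fun x hx => (hx₁m hx).trans key
  have htan : (2:ℝ)⁻¹ • (y₀ - x₀) ∈ posTangentConeAt A x₀ := by
    apply mem_posTangentConeAt_of_segment_subset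
    intro x hx
    rw [segment_eq_image'] at hx
    obtain ⟨t, ⟨ht0, ht1⟩, rfl⟩ := hx
    have e : x₀ + t • (x₀ + (2:ℝ)⁻¹ • (y₀ - x₀) - x₀) - y₀ = (1 - t / 2) • (x₀ - y₀) := by
      module
    have e' : ‖x₀ + t • (x₀ + (2:ℝ)⁻¹ • (y₀ - x₀) - x₀) - y₀‖ = (1 - t / 2) * R := by
      rw [e, norm_smul, hx₀, Real.norm_of_nonneg (by linarith)]
    constructor
    · rw [Metric.mem_closedBall, dist_eq_norm, e']; nlinarith
    · rw [Metric.mem_ball, dist_eq_norm, e', not_lt]; nlinarith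
  have hfin := hmaxA.localize.hasFDerivWithinAt_nonpos (hzd x₀ hx₀A.1).hasFDerivWithinAt htan
  have e3 : y₀ - x₀ = -(x₀ - y₀) := by abel
  rw [e3] at hfin
  simp only [innerSL_apply_apply, hBg, inner_add_left, inner_smul_left, inner_smul_right,
    inner_neg_right, real_inner_self_eq_norm_sq, RCLike.conj_to_real, hx₀] at hfin
  have h5 : 0 < ε * (2 * α * Real.exp (-α * R ^ 2) * R ^ 2) := by positivity
  nlinarith

lemma grad_facts (n : ℕ) (u : EuclideanSpace ℝ (Fin n) → ℝ) (U : Set (EuclideanSpace ℝ (Fin n)))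
    (hU : IsOpen U) (hu : ContDiffOn ℝ (⊤ : ℕ∞) u U) :
    (∀ x ∈ U, HasFDerivAt u (innerSL ℝ (gradient u x)) x) ∧
    (∀ x ∈ U, HasFDerivAt (gradient u) (fderiv ℝ (gradient u) x) x) ∧
    ContDiffOn ℝ (⊤ : ℕ∞) (gradient u) U ∧
    ContinuousOn (fderiv ℝ (gradient u)) U := by
  have hg : ContDiffOn ℝ (⊤ : ℕ∞) (gradient u) U := by
    have h1 : ContDiffOn ℝ (⊤ : ℕ∞) (fderiv ℝ u) U := hu.fderiv_of_isOpen hU (by simp)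
    exact (InnerProductSpace.toDual ℝ (EuclideanSpace ℝ (Fin n))).symm.contDiff.comp_contDiffOn h1
  refine ⟨fun x hx => ?_, fun x hx => ?_, hg, ?_⟩
  · have h1 : DifferentiableAt ℝ u x :=
      (hu.contDiffAt (hU.mem_nhds hx)).differentiableAt (by simp)
    exact h1.hasGradientAt.hasFDerivAt
  · exact ((hg.contDiffAt (hU.mem_nhds hx)).differentiableAt (by simp)).hasFDerivAt
  · exact (hg.continuousOn_fderiv_of_isOpen hU (by simp))

/-- The operator in nondivergence form. -/
def Gf (n : ℕ) (q : EuclideanSpace ℝ (Fin n) ×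
    (EuclideanSpace ℝ (Fin n) →L[ℝ] EuclideanSpace ℝ (Fin n))) : ℝ :=
  Qf n q.1 q.2 / Real.sqrt (1 - ‖q.1‖ ^ 2) ^ 3

lemma MOp_eq (n : ℕ) (u : EuclideanSpace ℝ (Fin n) → ℝ) (x : EuclideanSpace ℝ (Fin n))
    (H : EuclideanSpace ℝ (Fin n) →L[ℝ] EuclideanSpace ℝ (Fin n))
    (hH : HasFDerivAt (gradient u) H x) (h1 : ‖gradient u x‖ < 1) :
    MOp n u x = Gf n (gradient u x, H) := by
  have hn0 := norm_nonneg (gradient u x)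
  have hpos : 0 < 1 - ‖gradient u x‖ ^ 2 := by nlinarith
  set s := Real.sqrt (1 - ‖gradient u x‖ ^ 2) with hs
  have hspos : 0 < s := Real.sqrt_pos.2 hpos
  have hssq : s ^ 2 = 1 - ‖gradient u x‖ ^ 2 := Real.sq_sqrt hpos.le
  have hterm : ∀ i : Fin n, fderiv ℝ (fun y => fderiv ℝ u y (ev n i) /
      Real.sqrt (1 - ‖gradient u y‖ ^ 2)) x (ev n i) =
      ⟪ev n i, H (ev n i)⟫ / s + ⟪gradient u x, H (⟪ev n i, gradient u x⟫ • ev n i)⟫ / s ^ 3 := by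
    intro i
    have hfun : (fun y => fderiv ℝ u y (ev n i) / Real.sqrt (1 - ‖gradient u y‖ ^ 2)) =
        fun y => ⟪ev n i, gradient u y⟫ * (Real.sqrt (1 - ‖gradient u y‖ ^ 2))⁻¹ := by
      funext y
      rw [real_inner_comm, inner_gradient_left, div_eq_mul_inv]
    rw [hfun]
    have d1 : HasFDerivAt (fun y => ⟪ev n i, gradient u y⟫) ((innerSL ℝ (ev n i)).comp H) x :=
      (innerSL ℝ (ev n i)).hasFDerivAt.comp x hH
    have d2 := ((hH.norm_sq.const_sub 1).sqrt hpos.ne')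
    have d3 := (hasDerivAt_inv hspos.ne').comp_hasFDerivAt x d2
    have d4 := (d1.mul d3).fderiv
    erw [d4]
    simp only [Function.comp, ← hs, add_apply, smul_apply, ContinuousLinearMap.comp_apply,
      innerSL_apply_apply, smul_eq_mul, neg_apply, map_smul, inner_smul_right, nsmul_eq_mul]
    field_simp
    simp
    ring
  unfold MOp
  rw [Finset.sum_congr rfl (fun i _ => hterm i), Finset.sum_add_distrib, ← Finset.sum_div,
    ← Finset.sum_div, ← inner_sum, ← map_sum]
  have hsum : ∑ i, ⟪ev n i, gradient u x⟫ • ev n i = gradient u x := by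
    have := (EuclideanSpace.basisFun (Fin n) ℝ).sum_repr' (gradient u x)
    simpa [ev, EuclideanSpace.basisFun_apply] using this
  rw [hsum]
  unfold Gf Qf
  simp only [← hs]
  rw [← hssq]
  field_simp

lemma Gf_lip (n : ℕ) (ρ R : ℝ) (hρ0 : 0 ≤ ρ) (hρ : ρ < 1) :
    ∃ K : ℝ, 0 ≤ K ∧ ∀ p q : EuclideanSpace ℝ (Fin n),
      ∀ H : EuclideanSpace ℝ (Fin n) →L[ℝ] EuclideanSpace ℝ (Fin n),
      ‖p‖ ≤ ρ → ‖q‖ ≤ ρ → ‖H‖ ≤ R → |Gf n (p, H) - Gf n (q, H)| ≤ K * ‖p - q‖ := by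
  set S : Set (EuclideanSpace ℝ (Fin n) ×
    (EuclideanSpace ℝ (Fin n) →L[ℝ] EuclideanSpace ℝ (Fin n))) :=
    Metric.closedBall 0 ρ ×ˢ Metric.closedBall 0 R with hS
  have hd : ContDiffOn ℝ 1 (Gf n) S := by
    intro q hq
    have hq1 : ‖q.1‖ ≤ ρ := by simpa using hq.1
    have hpos : 0 < 1 - ‖q.1‖ ^ 2 := by nlinarith [norm_nonneg q.1]
    have hf : ContDiff ℝ 1 (fun q : EuclideanSpace ℝ (Fin n) ×
        (EuclideanSpace ℝ (Fin n) →L[ℝ] EuclideanSpace ℝ (Fin n)) => ‖q.1‖ ^ 2) :=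
      contDiff_fst.norm_sq ℝ
    have hQ : ContDiff ℝ 1 (fun q : EuclideanSpace ℝ (Fin n) ×
        (EuclideanSpace ℝ (Fin n) →L[ℝ] EuclideanSpace ℝ (Fin n)) => Qf n q.1 q.2) := by
      unfold Qf
      refine ((contDiff_const.sub hf).mul (ContDiff.sum fun i _ => ?_)).add ?_
      · exact contDiff_const.inner ℝ (contDiff_snd.clm_apply contDiff_const)
      · exact contDiff_fst.inner ℝ (contDiff_snd.clm_apply contDiff_fst)
    have : ContDiffAt ℝ 1 (Gf n) q := by
      unfold Gf
      refine hQ.contDiffAt.div (((contDiff_const.sub hf).contDiffAt.sqrt hpos.ne').pow 3) ?_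
      exact pow_ne_zero _ (Real.sqrt_pos.2 hpos).ne'
    exact this.contDiffWithinAt
  obtain ⟨K, hK⟩ := hd.exists_lipschitzOnWith one_ne_zero
    ((convex_closedBall _ _).prod (convex_closedBall _ _))
    ((isCompact_closedBall _ _).prod (isCompact_closedBall _ _))
  refine ⟨K, K.2, fun p q H hp hq hH => ?_⟩
  have h1 := hK.dist_le_mul (p, H) ⟨by simpa using hp, by simpa using hH⟩
    (q, H) ⟨by simpa using hq, by simpa using hH⟩
  rw [Real.dist_eq] at h1
  simpa [Prod.dist_eq, dist_eq_norm] using h1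

lemma Qf_sub (n : ℕ) (p : EuclideanSpace ℝ (Fin n))
    (H H' : EuclideanSpace ℝ (Fin n) →L[ℝ] EuclideanSpace ℝ (Fin n)) :
    Qf n p (H - H') = Qf n p H - Qf n p H' := by
  unfold Qf
  simp only [sub_apply, inner_sub_right, Finset.sum_sub_distrib]
  ring

lemma Qf_ge (n : ℕ) (p q : EuclideanSpace ℝ (Fin n)) (K : ℝ) (hK : 0 ≤ K)
    (H H' : EuclideanSpace ℝ (Fin n) →L[ℝ] EuclideanSpace ℝ (Fin n)) (hp : ‖p‖ < 1)
    (hG : Gf n (q, H') ≤ Gf n (p, H)) (hl : |Gf n (p, H') - Gf n (q, H')| ≤ K * ‖p - q‖) :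
    -(K * ‖p - q‖) ≤ Qf n p (H - H') := by
  have hpos : 0 < 1 - ‖p‖ ^ 2 := by nlinarith [norm_nonneg p]
  set s := Real.sqrt (1 - ‖p‖ ^ 2) with hs
  have hspos : 0 < s := Real.sqrt_pos.2 hpos
  have hs1 : s ≤ 1 := Real.sqrt_le_one.2 (by nlinarith [norm_nonneg p])
  have h1 : Qf n p (H - H') / s ^ 3 = Gf n (p, H) - Gf n (p, H') := by
    rw [Qf_sub, sub_div]; rfl
  have h2 : -(K * ‖p - q‖) ≤ Qf n p (H - H') / s ^ 3 := by
    rw [h1]; have := (abs_le.1 hl).2; linarith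
  rw [le_div_iff₀ (by positivity)] at h2
  have h3 : s ^ 3 ≤ 1 := pow_le_one₀ hspos.le hs1
  have h4 : 0 ≤ K * ‖p - q‖ := by positivity
  nlinarith

lemma dom_open (n : ℕ) (Ω : Set (EuclideanSpace ℝ (Fin n)))
    (g : EuclideanSpace ℝ (Fin n) → ℝ) (θ : ℝ) (hΩ : IsUnifConvexDefFn n Ω g θ) : IsOpen Ω := by
  obtain ⟨hg, rfl, -⟩ := hΩ
  exact isOpen_lt continuous_const hg.continuous

lemma dom_convex (n : ℕ) (Ω : Set (EuclideanSpace ℝ (Fin n)))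
    (g : EuclideanSpace ℝ (Fin n) → ℝ) (θ : ℝ) (hΩ : IsUnifConvexDefFn n Ω g θ) : Convex ℝ Ω := by
  obtain ⟨hg, rfl, -, hθ, hc⟩ := hΩ
  obtain ⟨f1, f2, -, -⟩ := grad_facts n g Set.univ isOpen_univ hg.contDiffOn
  rw [convex_iff_segment_subset]
  intro x hx y hy
  rw [segment_eq_image']
  rintro _ ⟨t, ht, rfl⟩
  have hline : ∀ t : ℝ, HasDerivAt (fun s : ℝ => x + s • (y - x)) (y - x) t := fun t => by
    simpa using ((hasDerivAt_id t).smul_const (y - x)).const_add x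
  set φ : ℝ → ℝ := fun t => g (x + t • (y - x)) with hφ
  have hd : ∀ t, HasDerivAt φ ⟪gradient g (x + t • (y - x)), y - x⟫ t := fun t => by
    have := (f1 _ (Set.mem_univ _)).comp_hasDerivAt t (hline t)
    rw [innerSL_apply_apply] at this
    exact this
  have hde : deriv φ = fun t => ⟪gradient g (x + t • (y - x)), y - x⟫ :=
    funext fun t => (hd t).deriv
  have hdd : ∀ t, HasDerivAt (fun t : ℝ => ⟪gradient g (x + t • (y - x)), y - x⟫)
      ⟪fderiv ℝ (gradient g) (x + t • (y - x)) (y - x), y - x⟫ t := fun t => by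
    have := ((f2 _ (Set.mem_univ _)).comp_hasDerivAt t (hline t)).inner ℝ
      (hasDerivAt_const t (y - x))
    simpa using this
  have hcon : ConcaveOn ℝ Set.univ φ := by
    refine concaveOn_univ_of_deriv2_nonpos (fun t => (hd t).differentiableAt) ?_ ?_
    · rw [hde]; exact fun t => (hdd t).differentiableAt
    · intro t
      rw [Function.iterate_succ, Function.iterate_one, Function.comp, hde, (hdd t).deriv,
        real_inner_comm]
      have h1 := hc (x + t • (y - x)) (y - x)
      have h2 : 0 ≤ θ * ‖y - x‖ ^ 2 := by positivity
      linarith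
  have h3 := (hcon.convex_gt 0).ordConnected.out
    (x := 0) ⟨Set.mem_univ _, by simpa [hφ] using hx⟩ (y := 1)
    ⟨Set.mem_univ _, by simpa [hφ] using hy⟩ ht
  exact h3.2

lemma interior_ball (n : ℕ) (Ω : Set (EuclideanSpace ℝ (Fin n)))
    (g : EuclideanSpace ℝ (Fin n) → ℝ) (θ : ℝ) (hΩ : IsUnifConvexDefFn n Ω g θ)
    (x₀ : EuclideanSpace ℝ (Fin n)) (hx₀ : x₀ ∈ frontier Ω) :
    ∃ y₀ R, 0 < R ∧ ‖x₀ - y₀‖ = R ∧ Metric.ball y₀ R ⊆ Ω := by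
  have hop := dom_open n Ω g θ hΩ
  obtain ⟨hg, rfl, hν, hθ, hc⟩ := hΩ
  obtain ⟨f1, f2, f3, -⟩ := grad_facts n g Set.univ isOpen_univ hg.contDiffOn
  have hG := hν x₀ hx₀
  have hg0 : g x₀ = 0 := by
    rw [hop.frontier_eq] at hx₀
    apply le_antisymm (not_lt.1 hx₀.2)
    exact closure_minimal (t := {p | 0 ≤ g p}) (fun p (hp : 0 < g p) => hp.le)
      (isClosed_le continuous_const hg.continuous) hx₀.1
  set G := gradient g x₀ with hGd
  obtain ⟨K, t, ht, hL⟩ := ((f3.contDiffAt (x := x₀) Filter.univ_mem).of_le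
    (by simp : (1 : WithTop ℕ∞) ≤ (⊤ : ℕ∞))).exists_lipschitzOnWith
  obtain ⟨δ, hδ, hδt⟩ := Metric.mem_nhds_iff.1 ht
  obtain ⟨R, hR, hRδ, hRK⟩ : ∃ R : ℝ, 0 < R ∧ 2 * R < δ ∧ 2 * R * K ≤ 1 := by
    refine ⟨min (δ / 4) (1 / (2 * (K + 1))), by positivity, ?_, ?_⟩
    · have := min_le_left (δ / 4) (1 / (2 * ((K:ℝ) + 1))); linarith
    · have h1 := min_le_right (δ / 4) (1 / (2 * ((K:ℝ) + 1)))
      have hK0 : (0:ℝ) ≤ K := K.2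
      calc 2 * min (δ / 4) (1 / (2 * ((K:ℝ) + 1))) * K ≤ 2 * (1 / (2 * ((K:ℝ) + 1))) * K := by
            gcongr
        _ ≤ 1 := by
            field_simp
            linarith
  refine ⟨x₀ + R • G, R, hR, ?_, ?_⟩
  · simp [norm_smul, hG, abs_of_pos hR]
  intro x hx
  rw [Metric.mem_ball, dist_eq_norm] at hx
  have hsq : ‖x - x₀‖ ^ 2 - 2 * R * ⟪x - x₀, G⟫ + R ^ 2 < R ^ 2 := by
    have e : x - (x₀ + R • G) = (x - x₀) - R • G := by abel
    have h1 : ‖x - (x₀ + R • G)‖ ^ 2 < R ^ 2 := by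
      have := norm_nonneg (x - (x₀ + R • G)); gcongr
    rw [e, norm_sub_sq_real, inner_smul_right, norm_smul, hG, Real.norm_of_nonneg hR.le] at h1
    linarith
  have hxd : ‖x - x₀‖ < 2 * R := by
    have e : x - x₀ = (x - (x₀ + R • G)) + R • G := by abel
    have := norm_add_le (x - (x₀ + R • G)) (R • G)
    rw [← e, norm_smul, hG, Real.norm_of_nonneg hR.le] at this
    linarith
  have hmv : ‖(g x - ⟪G, x⟫) - (g x₀ - ⟪G, x₀⟫)‖ ≤ (K * ‖x - x₀‖) * ‖x - x₀‖ := by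
    refine (convex_closedBall x₀ ‖x - x₀‖).norm_image_sub_le_of_norm_hasFDerivWithin_le
      (f := fun y => g y - ⟪G, y⟫) (f' := fun y => innerSL ℝ (gradient g y) - innerSL ℝ G)
      (fun y hy => ?_) (fun y hy => ?_) ?_ ?_
    · exact ((f1 y (Set.mem_univ _)).sub (innerSL ℝ G).hasFDerivAt).hasFDerivWithinAt
    · have hyt : y ∈ t := hδt (by
        rw [Metric.mem_closedBall] at hy; rw [Metric.mem_ball]; linarith)
      have h1 := hL.dist_le_mul y hyt x₀ (mem_of_mem_nhds ht)
      rw [← map_sub, innerSL_apply_norm, ← dist_eq_norm]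
      rw [Metric.mem_closedBall] at hy
      exact h1.trans (mul_le_mul_of_nonneg_left hy K.2)
    · exact Metric.mem_closedBall_self (norm_nonneg _)
    · rw [Metric.mem_closedBall, dist_eq_norm]
  rw [hg0, Real.norm_eq_abs] at hmv
  have h1 := (abs_le.1 hmv).1
  have h2 : ⟪x - x₀, G⟫ = ⟪G, x⟫ - ⟪G, x₀⟫ := by
    rw [real_inner_comm, inner_sub_right]
  show 0 < g x
  have h3 : 0 ≤ ‖x - x₀‖ ^ 2 * (1 - 2 * R * K) := mul_nonneg (by positivity) (by linarith)
  have h4 : 0 < 2 * R * g x := by nlinarith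
  exact pos_of_mul_pos_right (by linarith : 0 < (2 * R) * g x) (by positivity)

lemma strict_mono_grad {F : Type*} [NormedAddCommGroup F] [InnerProductSpace ℝ F]
    (P : F → F) (W : F → F →L[ℝ] F) (S : Set F) (hS : Convex ℝ S)
    (hP : ∀ x ∈ S, HasFDerivAt P (W x) x) (hW : ∀ x ∈ S, ∀ ξ, ξ ≠ 0 → 0 < ⟪ξ, W x ξ⟫)
    (x y : F) (hx : x ∈ S) (hy : y ∈ S) (hxy : y ≠ x) : 0 < ⟪P y - P x, y - x⟫ := by
  have hline : ∀ t : ℝ, HasDerivAt (fun s : ℝ => x + s • (y - x)) (y - x) t := fun t => by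
    simpa using ((hasDerivAt_id t).smul_const (y - x)).const_add x
  have hmem : ∀ t ∈ Set.Icc (0:ℝ) 1, x + t • (y - x) ∈ S := fun t ht => by
    apply hS.segment_subset hx hy
    rw [segment_eq_image']; exact ⟨t, ht, rfl⟩
  have hdd : ∀ t ∈ Set.Icc (0:ℝ) 1, HasDerivAt (fun t : ℝ => ⟪P (x + t • (y - x)), y - x⟫)
      ⟪W (x + t • (y - x)) (y - x), y - x⟫ t := fun t ht => by
    have := ((hP _ (hmem t ht)).comp_hasDerivAt t (hline t)).inner ℝ
      (hasDerivAt_const t (y - x))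
    simpa using this
  obtain ⟨t, ht, hte⟩ := exists_hasDerivAt_eq_slope _ _ (zero_lt_one (α := ℝ))
    (fun t ht => (hdd t ht).continuousAt.continuousWithinAt)
    (fun t ht => hdd t (Set.Ioo_subset_Icc_self ht))
  have h1 := hW _ (hmem t (Set.Ioo_subset_Icc_self ht)) (y - x) (sub_ne_zero.2 hxy)
  rw [real_inner_comm, hte] at h1
  rw [inner_sub_left]
  simpa using h1

lemma uniq (n : ℕ) (hn : 1 ≤ n) (Ω Ω' : Set (EuclideanSpace ℝ (Fin n)))
    (g : EuclideanSpace ℝ (Fin n) → ℝ) (θ : ℝ)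
    (hΩb : Bornology.IsBounded Ω) (hΩ'b : Bornology.IsBounded Ω')
    (hΩ : IsUnifConvexDefFn n Ω g θ)
    (hsub : closure Ω' ⊆ Metric.ball (0 : EuclideanSpace ℝ (Fin n)) 1)
    (u v : EuclideanSpace ℝ (Fin n) → ℝ) (c c' : ℝ) (hu : IsSol n Ω Ω' u c)
    (hv : IsSol n Ω Ω' v c') (hcc : c' ≤ c) :
    ∀ x ∈ Ω, gradient u x = gradient v x := by
  intro x hx
  have hop := dom_open n Ω g θ hΩ
  have hconv := dom_convex n Ω g θ hΩ
  have hcpt : IsCompact (closure Ω) := hΩb.isCompact_closure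
  have hcconv := hconv.closure
  obtain ⟨⟨U, hUo, hUs, hUc⟩, hu1, -, hubij, huM⟩ := hu
  obtain ⟨⟨V, hVo, hVs, hVc⟩, hv1, hvpos, hvbij, hvM⟩ := hv
  obtain ⟨u1, u2, u3, u4⟩ := grad_facts n u U hUo hUc
  obtain ⟨v1, v2, v3, v4⟩ := grad_facts n v V hVo hVc
  have hmu : Set.MapsTo (gradient u) (closure Ω) (closure Ω') :=
    hubij.mapsTo.closure_of_continuousOn (u3.continuousOn.mono hUs)
  have hmv : Set.MapsTo (gradient v) (closure Ω) (closure Ω') :=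
    hvbij.mapsTo.closure_of_continuousOn (v3.continuousOn.mono hVs)
  have hsv : closure Ω' ⊆ gradient v '' closure Ω := by
    refine closure_minimal ?_ (hcpt.image_of_continuousOn (v3.continuousOn.mono hVs)).isClosed
    rw [← hvbij.image_eq]
    exact Set.image_mono subset_closure
  obtain ⟨ρ, hρ0, hρ1, hρ⟩ : ∃ ρ : ℝ, 0 ≤ ρ ∧ ρ < 1 ∧ ∀ p ∈ closure Ω', ‖p‖ ≤ ρ := by
    obtain ⟨p, hp, hpm⟩ := hΩ'b.isCompact_closure.exists_isMaxOn
      ⟨_, hmu (subset_closure hx)⟩ continuous_norm.continuousOn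
    exact ⟨‖p‖, norm_nonneg _, by simpa using hsub hp, fun q hq => hpm hq⟩
  obtain ⟨R₀, hR₀⟩ := hcpt.exists_bound_of_continuousOn (v4.mono hVs)
  obtain ⟨K, hK, hlip⟩ := Gf_lip n ρ R₀ hρ0 hρ1
  set w : EuclideanSpace ℝ (Fin n) → ℝ := fun x => u x - v x with hw
  set P : EuclideanSpace ℝ (Fin n) → EuclideanSpace ℝ (Fin n) :=
    fun x => gradient u x - gradient v x with hP
  set W : EuclideanSpace ℝ (Fin n) → EuclideanSpace ℝ (Fin n) →L[ℝ] EuclideanSpace ℝ (Fin n) :=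
    fun x => fderiv ℝ (gradient u) x - fderiv ℝ (gradient v) x with hW
  have hwd : ∀ x ∈ closure Ω, HasFDerivAt w (innerSL ℝ (P x)) x := fun x hx => by
    have := (u1 x (hUs hx)).sub (v1 x (hVs hx))
    rw [← map_sub] at this
    exact this
  have hPd : ∀ x ∈ closure Ω, HasFDerivAt P (W x) x := fun x hx =>
    (u2 x (hUs hx)).sub (v2 x (hVs hx))
  have hQ : ∀ x ∈ Ω, ∃ p, ‖p‖ ≤ ρ ∧ -(K * ‖P x‖) ≤ Qf n p (W x) := fun x hx => by
    have hx' := subset_closure hx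
    refine ⟨gradient u x, hρ _ (hmu hx'), Qf_ge n _ _ K hK _ _ (hu1 x hx') ?_ ?_⟩
    · rw [← MOp_eq n u x _ (u2 x (hUs hx')) (hu1 x hx'),
        ← MOp_eq n v x _ (v2 x (hVs hx')) (hv1 x hx'), huM x hx, hvM x hx]
      exact hcc
    · exact hlip _ _ _ (hρ _ (hmu hx')) (hρ _ (hmv hx')) (hR₀ x hx')
  have hwc : ContinuousOn w (closure Ω) := fun x hx => (hwd x hx).continuousAt.continuousWithinAt
  obtain ⟨xm, hxm, hmax⟩ := hcpt.exists_isMaxOn ⟨x, subset_closure hx⟩ hwc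
  obtain ⟨m, hm⟩ : ∃ m, m = w xm := ⟨_, rfl⟩
  have hle : ∀ y ∈ closure Ω, w y ≤ m := fun y hy => by rw [hm]; exact hmax hy
  have hzero : ∀ x₀ ∈ closure Ω, w x₀ = m → P x₀ = 0 := by
    intro x₀ hx₀ hx₀m
    obtain ⟨x', hx', hx'e⟩ := hsv (hmu hx₀)
    by_contra hne
    have hxne : x' ≠ x₀ := by
      rintro rfl
      exact hne (by simp [hP, hx'e])
    have h1 := strict_mono_grad (gradient v) (fderiv ℝ (gradient v)) (closure Ω) hcconv
      (fun y hy => v2 y (hVs hy)) hvpos x₀ x' hx₀ hx' hxne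
    rw [hx'e] at h1
    have hmx : IsMaxOn w (closure Ω) x₀ := fun y hy => by
      show w y ≤ w x₀
      rw [hx₀m]; exact hle y hy
    have h2 := hmx.localize.hasFDerivWithinAt_nonpos (hwd x₀ hx₀).hasFDerivWithinAt
      (sub_mem_posTangentConeAt_of_segment_subset (hcconv.segment_subset hx₀ hx'))
    rw [innerSL_apply_apply] at h2
    exact absurd h1 (not_lt.2 h2)
  have hnoball : ∀ y₀ x₀ R, 0 < R → ‖x₀ - y₀‖ = R → Metric.ball y₀ R ⊆ Ω →
      (∀ y ∈ Metric.ball y₀ R, w y < m) → w x₀ = m → False := by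
    intro y₀ x₀ R hR hxR hb hlt hx₀m
    have hcb : Metric.closedBall y₀ R ⊆ closure Ω := by
      rw [← closure_ball y₀ hR.ne']; exact closure_mono hb
    have h1 := hopf n hn w P W y₀ x₀ R ρ K hR hxR (fun y hy => hwd y (hcb hy))
      (fun y hy => hPd y (subset_closure (hb hy)))
      (fun y hy => by rw [hx₀m]; exact hle y (hcb hy))
      (fun y hy => by rw [hx₀m]; exact hlt y hy) hK hρ1 (fun y hy => hQ y (hb hy))
    rw [hzero x₀ (hcb (by rw [Metric.mem_closedBall, dist_eq_norm, hxR])) hx₀m] at h1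
    simp at h1
  by_contra hne
  have hxlt : w x < m := by
    refine lt_of_le_of_ne (hle x (subset_closure hx)) fun h => hne ?_
    exact sub_eq_zero.1 (hzero x (subset_closure hx) h)
  by_cases hall : ∀ y ∈ Ω, w y < m
  · have hxmf : xm ∈ frontier Ω := by
      rw [hop.frontier_eq]
      exact ⟨hxm, fun h => absurd (hall xm h) (by rw [hm]; exact lt_irrefl _)⟩
    obtain ⟨y₀, R, hR, hxR, hb⟩ := interior_ball n Ω g θ hΩ xm hxmf
    exact hnoball y₀ xm R hR hxR hb (fun y hy => hall y (hb hy)) hm.symm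
  · push Not at hall
    obtain ⟨q₀, hq₀, hq₀m⟩ := hall
    have hTo : IsOpen (Ω ∩ w ⁻¹' Set.Iio m) :=
      (hwc.mono subset_closure).isOpen_inter_preimage hop isOpen_Iio
    have hex : ∃ q ∈ Ω, q ∈ closure (Ω ∩ w ⁻¹' Set.Iio m) ∧ w q = m := by
      by_contra hcon
      push Not at hcon
      have h1 := hconv.isPreconnected.subset_of_closure_inter_subset hTo ⟨x, hx, hx, hxlt⟩
        (fun q hq => ⟨hq.2, lt_of_le_of_ne (hle q (subset_closure hq.2)) (hcon q hq.2 hq.1)⟩)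
      exact absurd (h1 hq₀).2 (not_lt.2 hq₀m)
    obtain ⟨q, hq, hqc, hqm⟩ := hex
    obtain ⟨r, hr, hrb⟩ := Metric.isOpen_iff.1 hop q hq
    obtain ⟨p, hp, hpq⟩ := Metric.mem_closure_iff.1 hqc (r / 2) (by positivity)
    have hcb : Metric.closedBall p (dist q p) ⊆ Ω := fun y hy => hrb (by
      rw [Metric.mem_closedBall] at hy
      rw [Metric.mem_ball]
      have := dist_triangle y p q
      rw [dist_comm p q] at this
      linarith)
    have hSc : IsCompact (Metric.closedBall p (dist q p) ∩ w ⁻¹' {m}) :=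
      (isCompact_closedBall _ _).of_isClosed_subset
        ((hwc.mono (hcb.trans subset_closure)).preimage_isClosed_of_isClosed
          Metric.isClosed_closedBall isClosed_singleton) Set.inter_subset_left
    obtain ⟨x₀, hx₀, hx₀m⟩ := hSc.exists_isMinOn ⟨q, by simp, hqm⟩
      (f := fun y => dist y p) (continuous_id.dist continuous_const).continuousOn
    have hx₀d : dist x₀ p ≤ dist q p := hx₀.1
    have hx₀w : w x₀ = m := hx₀.2
    have hsubb : Metric.ball p (dist x₀ p) ⊆ Metric.closedBall p (dist q p) := fun y hy => by
      rw [Metric.mem_ball] at hy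
      rw [Metric.mem_closedBall]; linarith
    refine hnoball p x₀ (dist x₀ p) ?_ (dist_eq_norm _ _).symm (hsubb.trans hcb) ?_ hx₀w
    · rw [dist_pos]
      rintro rfl
      exact absurd hp.2 (by simp [hx₀w])
    · intro y hy
      refine lt_of_le_of_ne (hle y (subset_closure (hcb (hsubb hy)))) fun h => ?_
      have h1 : dist x₀ p ≤ dist y p := hx₀m ⟨hsubb hy, h⟩
      rw [Metric.mem_ball] at hy
      linarith

lemma pinch (n : ℕ)
    (H : EuclideanSpace ℝ (Fin n) → EuclideanSpace ℝ (Fin n) →L[ℝ] EuclideanSpace ℝ (Fin n))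
    (S : Set (EuclideanSpace ℝ (Fin n))) (hS : IsCompact S) (hH : ContinuousOn H S)
    (hpos : ∀ x ∈ S, ∀ ξ, ξ ≠ 0 → 0 < ⟪ξ, H x ξ⟫) :
    ∃ C : ℝ, 0 < C ∧ ∀ x ∈ S, ∀ ξ : EuclideanSpace ℝ (Fin n),
      (1 / C) * ‖ξ‖ ^ 2 ≤ ⟪ξ, H x ξ⟫ ∧ ⟪ξ, H x ξ⟫ ≤ C * ‖ξ‖ ^ 2 := by
  set T := S ×ˢ Metric.sphere (0 : EuclideanSpace ℝ (Fin n)) 1 with hT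
  have hTc : IsCompact T := hS.prod (isCompact_sphere _ _)
  have hf : ContinuousOn (fun q : EuclideanSpace ℝ (Fin n) × EuclideanSpace ℝ (Fin n) =>
      ⟪q.2, H q.1 q.2⟫) T := by
    refine continuousOn_snd.inner (𝕜 := ℝ) (ContinuousOn.clm_apply ?_ continuousOn_snd)
    exact hH.comp continuousOn_fst (fun q hq => hq.1)
  have hlow : ∃ a : ℝ, 0 < a ∧ ∀ q ∈ T, a ≤ ⟪q.2, H q.1 q.2⟫ := by
    rcases T.eq_empty_or_nonempty with h | h
    · exact ⟨1, one_pos, by simp [h]⟩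
    · obtain ⟨q, hq, hqm⟩ := hTc.exists_isMinOn h hf
      refine ⟨_, hpos q.1 hq.1 q.2 ?_, fun y hy => hqm hy⟩
      intro h0
      have := hq.2
      simp [h0] at this
  obtain ⟨a, ha, hla⟩ := hlow
  obtain ⟨b, hb⟩ := hS.exists_bound_of_continuousOn hH
  refine ⟨max (1 / a) (max b 1), by positivity, fun x hx ξ => ⟨?_, ?_⟩⟩
  · have h1 : 1 / max (1 / a) (max b 1) ≤ a := by
      rw [div_le_iff₀ (by positivity)]
      calc (1:ℝ) = a * (1 / a) := by field_simp
        _ ≤ _ := by gcongr; exact le_max_left _ _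
    have h2 : a * ‖ξ‖ ^ 2 ≤ ⟪ξ, H x ξ⟫ := by
      by_cases h0 : ξ = 0
      · simp [h0]
      have hn : 0 < ‖ξ‖ := norm_pos_iff.2 h0
      have h3 := hla (x, ‖ξ‖⁻¹ • ξ) ⟨hx, by simp [norm_smul, hn.ne']⟩
      simp only [map_smul, inner_smul_left, inner_smul_right, RCLike.conj_to_real] at h3
      calc a * ‖ξ‖ ^ 2 ≤ (‖ξ‖⁻¹ * (‖ξ‖⁻¹ * ⟪ξ, H x ξ⟫)) * ‖ξ‖ ^ 2 := by gcongr
        _ = _ := by field_simp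
    exact (mul_le_mul_of_nonneg_right h1 (by positivity)).trans h2
  · calc ⟪ξ, H x ξ⟫ ≤ ‖ξ‖ * ‖H x ξ‖ := real_inner_le_norm _ _
      _ ≤ ‖ξ‖ * (‖H x‖ * ‖ξ‖) := by gcongr; exact (H x).le_opNorm ξ
      _ ≤ ‖ξ‖ * (max (1 / a) (max b 1) * ‖ξ‖) := by
          gcongr
          exact (hb x hx).trans ((le_max_left _ _).trans (le_max_right _ _))
      _ = _ := by ring

/-- Lemma 3.6/4.8.  Uniform pinching of the Hessian:
`(1/C₃₇)|ξ|² ≤ ⟨ξ, D²u(x) ξ⟩ ≤ C₃₇|ξ|²` on the closure of `Ω`. -/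
theorem statement16 (n : ℕ) (hn : 2 ≤ n) (Ω Ω' : Set (EuclideanSpace ℝ (Fin n)))
    (g h : EuclideanSpace ℝ (Fin n) → ℝ) (θ₁ θ₂ : ℝ)
    (hΩb : Bornology.IsBounded Ω) (hΩ'b : Bornology.IsBounded Ω')
    (hΩ : IsUnifConvexDefFn n Ω g θ₁) (hΩ' : IsUnifConvexDefFn n Ω' h θ₂)
    (hsub : closure Ω' ⊆ Metric.ball (0 : EuclideanSpace ℝ (Fin n)) 1) :
    ∃ C₃₇ : ℝ, 0 < C₃₇ ∧
      ∀ (u : EuclideanSpace ℝ (Fin n) → ℝ) (c : ℝ), IsSol n Ω Ω' u c →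
        ∀ x ∈ closure Ω, ∀ ξ : EuclideanSpace ℝ (Fin n),
          (1 / C₃₇) * ‖ξ‖ ^ 2 ≤ ⟪ξ, fderiv ℝ (gradient u) x ξ⟫ ∧
          ⟪ξ, fderiv ℝ (gradient u) x ξ⟫ ≤ C₃₇ * ‖ξ‖ ^ 2 := by
  by_cases hex : ∃ v c', IsSol n Ω Ω' v c'
  swap
  · exact ⟨1, one_pos, fun u c hu => absurd ⟨u, c, hu⟩ hex⟩
  obtain ⟨v, c', hv⟩ := hex
  have hop := dom_open n Ω g θ₁ hΩ
  have hcpt : IsCompact (closure Ω) := hΩb.isCompact_closure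
  obtain ⟨V, hVo, hVs, hVc⟩ := hv.1
  obtain ⟨-, -, -, v4⟩ := grad_facts n v V hVo hVc
  obtain ⟨C, hC, hCp⟩ := pinch n (fderiv ℝ (gradient v)) (closure Ω) hcpt (v4.mono hVs) hv.2.2.1
  refine ⟨C, hC, fun u c hu => ?_⟩
  obtain ⟨U, hUo, hUs, hUc⟩ := hu.1
  obtain ⟨-, -, -, u4⟩ := grad_facts n u U hUo hUc
  have heq : ∀ x ∈ Ω, gradient u x = gradient v x := by
    rcases le_total c' c with h | h
    · exact uniq n (by lia) Ω Ω' g θ₁ hΩb hΩ'b hΩ hsub u v c c' hu hv h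
    · exact fun x hx =>
        (uniq n (by lia) Ω Ω' g θ₁ hΩb hΩ'b hΩ hsub v u c' c hv hu h x hx).symm
  have heq2 : Set.EqOn (fderiv ℝ (gradient u)) (fderiv ℝ (gradient v)) Ω := fun x hx => by
    apply Filter.EventuallyEq.fderiv_eq
    filter_upwards [hop.mem_nhds hx] with y hy using heq y hy
  have heq3 : Set.EqOn (fderiv ℝ (gradient u)) (fderiv ℝ (gradient v)) (closure Ω) :=
    heq2.of_subset_closure (u4.mono hUs) (v4.mono hVs) subset_closure subset_rfl
  intro x hx ξ
  rw [heq3 hx]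
  exact hCp x hx ξ
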